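/- arXiv:1805.00260 — 2 statements merged into one kernel-verified Lean document; each statement's English description precedes it below -/
import Mathlib

section
/- For every integer r ≥ 2: (i) if G is a (4,4r)-biregular bipartite graph, then r + 1 ≤ š(G) ≤ r² + 1; (ii) if G is a (4r−4,4r)-biregular bipartite graph, then š(G) ≤ r² + 1. -/
open SimpleGraph Finset

/-- A proper edge coloring of `G` with colors in `ℕ`: distinct edges of `G`
sharing an endpoint receive distinct colors. -/
def IsProperEdgeColoring {V : Type*} (G : SimpleGraph V) (c : Sym2 V → ℕ) : Prop :=
  ∀ e₁ ∈ G.edgeSet, ∀ e₂ ∈ G.edgeSet, e₁ ≠ e₂ → (∃ v, v ∈ e₁ ∧ v ∈ e₂) → c e₁ ≠ c e₂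

/-- The palette of a vertex `v`: the set of colors appearing on edges of `G` incident with `v`. -/
def palette {V : Type*} (G : SimpleGraph V) (c : Sym2 V → ℕ) (v : V) : Set ℕ :=
  {n | ∃ e ∈ G.edgeSet, v ∈ e ∧ c e = n}

/-- The palette index of `G`: the minimum number of distinct palettes occurring in a
proper edge coloring of `G`. -/
noncomputable def paletteIndex {V : Type*} (G : SimpleGraph V) : ℕ :=
  sInf {k | ∃ c : Sym2 V → ℕ, IsProperEdgeColoring G c ∧ (Set.range (palette G c)).ncard = k}

/-- `G` is `(a,b)`-biregular: bipartite with nonempty parts `(X, Y)` such that every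
vertex in `X` has degree `a` and every vertex in `Y` has degree `b`. -/
def IsBiregular {V : Type*} [Fintype V] (G : SimpleGraph V) [DecidableRel G.Adj] (a b : ℕ) : Prop :=
  ∃ X Y : Finset V, X.Nonempty ∧ Y.Nonempty ∧ Disjoint X Y ∧ (∀ v : V, v ∈ X ∨ v ∈ Y) ∧
    (∀ v w, G.Adj v w → (v ∈ X ∧ w ∈ Y) ∨ (v ∈ Y ∧ w ∈ X)) ∧
    (∀ v ∈ X, G.degree v = a) ∧ (∀ v ∈ Y, G.degree v = b)

/-!
Lower bound: the palette of a vertex `y` of degree `b` is covered by the palettes of its neighbors,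
which have size `a`, so at least `b / a` palettes of size `a` occur, besides the palette of `y`.

Upper bound: let `G` be `(2ld, 2lr)`-biregular with `d ≤ r`. By König's edge coloring theorem,
applied after splitting every vertex, the edges fall into `l` pairs of classes, each of which is
`(d, r)`-biregular. The two classes of a pair, one of them with its sides exchanged, are glued into
an `r`-regular bipartite multigraph by joining the two copies of each vertex `x` of degree `d` by
`r - d` dummy edges. In an `r`-edge-coloring of this multigraph both classes use at `x` exactly the
`d` colors missing on the dummy edges at `x`. The palette of `x` in `G` is therefore determined by
one `d`-subset of the `r` colors per pair, while vertices of degree `2lr` see every color. The two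
parts of the theorem are `l = 2` with `d = 1` and `d = r - 1`.
-/

open Function

/- A bipartite multigraph is given by its type of edges `E` and the endpoint maps `s : E → α` and
`t : E → β`; an edge coloring `c` is proper when `e ↦ (s e, c e)` and `e ↦ (t e, c e)` are
injective. -/
section Multigraph

variable {E α β κ : Type*} [DecidableEq α]

lemma card_filter_image_eq_one [Fintype β] [DecidableEq E] {s : E → α} {m : β → E}
    (hm : Bijective (s ∘ m)) (a : α) : #{e ∈ univ.image m | s e = a} = 1 := by
  obtain ⟨b, rfl, b_unique⟩ := hm.existsUnique a
  refine card_eq_one.2 ⟨m b, ext fun e ↦ ?_⟩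
  simp only [mem_filter, mem_image, mem_univ, true_and, mem_singleton]
  constructor
  · rintro ⟨⟨b', rfl⟩, h⟩
    rw [b_unique b' h]
  · rintro rfl
    exact ⟨⟨b, rfl⟩, rfl⟩

lemma injective_prodMk_snoc [DecidableEq E] {M : Finset E} {s : E → α} {k : ℕ}
    (hM : ∀ a, #{e ∈ M | s e = a} = 1) {c : {e // e ∉ M} → Fin k}
    (hc : Injective fun e : {e // e ∉ M} ↦ (s e, c e)) :
    Injective fun e ↦
      (s e, if he : e ∈ M then Fin.last k else (c ⟨e, he⟩).castSucc) := by
  intro e e' heq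
  obtain ⟨hs, hcol⟩ := Prod.mk.inj heq
  split_ifs at hcol with he he' he'
  · exact card_le_one.1 (hM (s e)).le e (by simp [he]) e' (by simp [he', hs])
  · exact absurd hcol.symm (Fin.castSucc_ne_last _)
  · exact absurd hcol (Fin.castSucc_ne_last _)
  · exact congrArg Subtype.val
      (@hc ⟨e, he⟩ ⟨e', he'⟩ (Prod.ext hs (Fin.castSucc_injective k hcol)))

variable [Fintype E] [DecidableEq β]

lemma card_filter_mem_of_card_fiber {s : E → α} {k : ℕ} (hs : ∀ a, #{e | s e = a} = k)
    (A : Finset α) : #{e | s e ∈ A} = #A * k := by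
  simp [← sum_card_fiberwise_eq_card_filter, hs]

lemma card_eq_mul_of_card_fiber [Fintype α] {s : E → α} {k : ℕ}
    (hs : ∀ a, #{e | s e = a} = k) : Fintype.card E = Fintype.card α * k := by
  simpa using card_filter_mem_of_card_fiber hs univ

lemma card_fiber_of_bijective_prodMk [Fintype κ] {s : E → α} {g : E → κ}
    (h : Bijective fun e ↦ (s e, g e)) (a : α) : #{e | s e = a} = Fintype.card κ := by
  refine card_bij (fun e _ ↦ g e) (fun _ _ ↦ mem_univ _) (fun e he e' he' heq ↦ ?_) fun i _ ↦ ?_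
  · simp only [mem_filter_univ] at he he'
    exact h.injective (Prod.ext (he.trans he'.symm) heq)
  · obtain ⟨e, he⟩ := h.surjective (a, i)
    obtain ⟨rfl, rfl⟩ := Prod.mk.inj he
    exact ⟨e, by simp, rfl⟩

lemma card_fiber_of_bijective_split [DecidableEq κ] {s : E → α} {m : ℕ} {g : E → Fin m}
    {c : E → κ} (h : Bijective fun e ↦ ((s e, g e), c e)) (p : α × κ) :
    #{e | (s e, c e) = p} = m := by
  let swap : (α × Fin m) × κ ≃ (α × κ) × Fin m := (Equiv.prodAssoc _ _ _).trans
    (((Equiv.refl α).prodCongr (Equiv.prodComm _ _)).trans (Equiv.prodAssoc _ _ _).symm)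
  have hswap : Bijective fun e ↦ ((s e, c e), g e) := swap.bijective.comp h
  simpa using card_fiber_of_bijective_prodMk hswap p

variable [Fintype κ]

lemma exists_bijective_prodMk_of_card_fiber {s : E → α}
    (hs : ∀ a, #{e | s e = a} = Fintype.card κ) :
    ∃ g : E → κ, Bijective fun e ↦ (s e, g e) := by
  have fiber_equiv (a : α) : Nonempty ({e // s e = a} ≃ κ) :=
    ⟨Fintype.equivOfCardEq ((Fintype.card_subtype _).trans (hs a))⟩
  let φ : E ≃ α × κ := (Equiv.sigmaFiberEquiv s).symm.trans
    (Equiv.sigmaEquivProdOfEquiv fun a ↦ (fiber_equiv a).some)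
  exact ⟨fun e ↦ (φ e).2, φ.bijective⟩

lemma card_le_card_biUnion_image_fiber {s : E → α} {t : E → β} {k : ℕ} (hk : 0 < k)
    (hs : ∀ a, #{e | s e = a} = k) (ht : ∀ b, #{e | t e = b} = k) (A : Finset α) :
    #A ≤ #(A.biUnion fun a ↦ ({e | s e = a} : Finset E).image t) := by
  set N := A.biUnion fun a ↦ ({e | s e = a} : Finset E).image t
  refine Nat.le_of_mul_le_mul_right ?_ hk
  calc #A * k = #{e | s e ∈ A} := (card_filter_mem_of_card_fiber hs A).symm
    _ ≤ #{e | t e ∈ N} := card_le_card <| monotone_filter_right _ fun e _ he ↦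
        mem_biUnion.2 ⟨s e, he, mem_image_of_mem t (by simp)⟩
    _ = #N * k := card_filter_mem_of_card_fiber ht N

lemma exists_transversal_of_card_fiber [Finite α] [Finite β] {s : E → α} {t : E → β} {k : ℕ}
    (hk : 0 < k) (hs : ∀ a, #{e | s e = a} = k) (ht : ∀ b, #{e | t e = b} = k) :
    ∃ m : α → E, Bijective (s ∘ m) ∧ Bijective (t ∘ m) := by
  cases nonempty_fintype α
  cases nonempty_fintype β
  obtain ⟨f, f_injective, hf⟩ := (all_card_le_biUnion_card_iff_exists_injective _).1
    (card_le_card_biUnion_image_fiber hk hs ht)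
  simp only [mem_image, mem_filter_univ] at hf
  choose m hsm htm using hf
  have card_eq : Fintype.card α = Fintype.card β := Nat.eq_of_mul_eq_mul_right hk <|
    (card_eq_mul_of_card_fiber hs).symm.trans (card_eq_mul_of_card_fiber ht)
  refine ⟨m, ?_, ?_⟩
  · rw [show s ∘ m = id from funext hsm]
    exact bijective_id
  · rw [show t ∘ m = f from funext htm]
    exact (Fintype.bijective_iff_injective_and_card f).2 ⟨f_injective, card_eq⟩

lemma exists_perfect_matching_of_card_fiber [Finite α] [Finite β] {s : E → α} {t : E → β}
    {k : ℕ} (hk : 0 < k) (hs : ∀ a, #{e | s e = a} = k) (ht : ∀ b, #{e | t e = b} = k) :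
    ∃ M : Finset E, (∀ a, #{e ∈ M | s e = a} = 1) ∧ ∀ b, #{e ∈ M | t e = b} = 1 := by
  classical
  cases nonempty_fintype α
  obtain ⟨m, hsm, htm⟩ := exists_transversal_of_card_fiber hk hs ht
  exact ⟨univ.image m, card_filter_image_eq_one hsm, card_filter_image_eq_one htm⟩

lemma card_fiber_compl_add [DecidableEq E] (M : Finset E) (s : E → α) (a : α) :
    #{e : {e // e ∉ M} | s e = a} + #{e ∈ M | s e = a} = #{e | s e = a} := by
  simp only [card_filter]
  rw [← sum_compl_add_sum M,
    ← sum_subtype Mᶜ (fun e ↦ mem_compl) fun e ↦ if s e = a then 1 else 0]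

theorem exists_injective_edge_coloring [Finite α] [Finite β] {s : E → α} {t : E → β} {k : ℕ}
    (hs : ∀ a, #{e | s e = a} = k) (ht : ∀ b, #{e | t e = b} = k) :
    ∃ c : E → Fin k, (Injective fun e ↦ (s e, c e)) ∧ Injective fun e ↦ (t e, c e) := by
  classical
  induction k generalizing E with
  | zero =>
    cases nonempty_fintype α
    have : IsEmpty E := Fintype.card_eq_zero_iff.1 (card_eq_mul_of_card_fiber hs)
    exact ⟨isEmptyElim, injective_of_subsingleton _, injective_of_subsingleton _⟩
  | succ k ih =>
    obtain ⟨M, hsM, htM⟩ := exists_perfect_matching_of_card_fiber k.succ_pos hs ht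
    obtain ⟨c, hsc, htc⟩ := ih (E := {e // e ∉ M}) (s := fun e ↦ s e) (t := fun e ↦ t e)
      (fun a ↦ by have := card_fiber_compl_add M s a; rw [hsM, hs] at this; exact Nat.succ.inj this)
      (fun b ↦ by have := card_fiber_compl_add M t b; rw [htM, ht] at this; exact Nat.succ.inj this)
    exact ⟨_, injective_prodMk_snoc hsM hsc, injective_prodMk_snoc htM htc⟩

lemma bijective_prodMk_of_injective [Finite α] {s : E → α}
    (hs : ∀ a, #{e | s e = a} = Fintype.card κ) {c : E → κ}
    (hc : Injective fun e ↦ (s e, c e)) : Bijective fun e ↦ (s e, c e) := by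
  cases nonempty_fintype α
  exact (Fintype.bijective_iff_injective_and_card _).2
    ⟨hc, by simpa using card_eq_mul_of_card_fiber hs⟩

theorem exists_bijective_edge_coloring [Finite α] [Finite β] {s : E → α} {t : E → β}
    (hs : ∀ a, #{e | s e = a} = Fintype.card κ) (ht : ∀ b, #{e | t e = b} = Fintype.card κ) :
    ∃ c : E → κ, (Bijective fun e ↦ (s e, c e)) ∧ Bijective fun e ↦ (t e, c e) := by
  obtain ⟨c, hsc, htc⟩ := exists_injective_edge_coloring hs ht
  let φ := (Fintype.equivFin κ).symm
  refine ⟨φ ∘ c, bijective_prodMk_of_injective hs ?_, bijective_prodMk_of_injective ht ?_⟩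
  · exact (injective_id.prodMap φ.injective).comp hsc
  · exact (injective_id.prodMap φ.injective).comp htc

lemma exists_split_of_card_fiber {s : E → α} {m : ℕ}
    (hs : ∀ a, #{e | s e = a} = Fintype.card κ * m) :
    ∃ g : E → Fin m, ∀ p : α × Fin m, #{e | (s e, g e) = p} = Fintype.card κ := by
  obtain ⟨g, hg⟩ := exists_bijective_prodMk_of_card_fiber (κ := Fin m × κ) (s := s)
    (by simpa [mul_comm] using hs)
  exact ⟨fun e ↦ (g e).1, card_fiber_of_bijective_prodMk (g := fun e ↦ (g e).2)
    ((Equiv.prodAssoc α (Fin m) κ).symm.bijective.comp hg)⟩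

theorem exists_equitable_edge_coloring [Finite α] [Finite β] [DecidableEq κ]
    {s : E → α} {t : E → β} {m n : ℕ} (hs : ∀ a, #{e | s e = a} = Fintype.card κ * m)
    (ht : ∀ b, #{e | t e = b} = Fintype.card κ * n) :
    ∃ c : E → κ, (∀ p : α × κ, #{e | (s e, c e) = p} = m) ∧
      ∀ p : β × κ, #{e | (t e, c e) = p} = n := by
  obtain ⟨g, hg⟩ := exists_split_of_card_fiber hs
  obtain ⟨h, hh⟩ := exists_split_of_card_fiber ht
  obtain ⟨c, hgc, hhc⟩ := exists_bijective_edge_coloring hg hh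
  exact ⟨c, card_fiber_of_bijective_split hgc, card_fiber_of_bijective_split hhc⟩

/-- One of the two endpoint maps of the bipartite multigraph that glues the two classes of edges
given by `b` together: edges with `b e` run from `α` to `β`, the others from `β` to `α`, and each
`x : α` carries a dummy edge `(x, i)` between its two copies for every `i : κ`. The other endpoint
map is obtained by negating `b`. -/
def pairedEndpoint (s : E → α) (t : E → β) (b : E → Bool) : E ⊕ α × κ → β ⊕ α :=
  Sum.elim (fun e ↦ if b e then .inr (s e) else .inl (t e)) fun p ↦ .inr p.1

lemma card_fiber_pairedEndpoint [Fintype α] {s : E → α} {t : E → β} {b : E → Bool} {r : ℕ}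
    (hs : ∀ x, #{e | s e = x ∧ b e} + Fintype.card κ = r)
    (ht : ∀ y, #{e | t e = y ∧ !b e} = r) (v : β ⊕ α) :
    #{e : E ⊕ α × κ | pairedEndpoint s t b e = v} = r := by
  rw [card_filter, Fintype.sum_sum_type, ← card_filter, ← card_filter]
  rcases v with y | x
  · rw [← ht y]
    simp [pairedEndpoint, ite_eq_iff, and_comm]
  · have card_dummy : #{p : α × κ | p.1 = x} = Fintype.card κ :=
      card_fiber_of_bijective_prodMk (g := Prod.snd) bijective_id x
    rw [← hs x, ← card_dummy]
    simp [pairedEndpoint, ite_eq_iff, and_comm]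

theorem exists_paired_edge_coloring [Finite α] [Finite β] {s : E → α} {t : E → β}
    {b : E → Bool} {d r : ℕ} (hdr : d ≤ r) (hs : ∀ p : α × Bool, #{e | (s e, b e) = p} = d)
    (ht : ∀ p : β × Bool, #{e | (t e, b e) = p} = r) :
    ∃ (c : E → Fin r) (P : α → Finset (Fin r)), (∀ a, #(P a) = d) ∧ (∀ e, c e ∈ P (s e)) ∧
      (Injective fun e ↦ (s e, b e, c e)) ∧ Injective fun e ↦ (t e, b e, c e) := by
  cases nonempty_fintype α
  simp only [Prod.forall, Prod.mk.injEq] at hs ht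
  obtain ⟨c, hL, hR⟩ := exists_injective_edge_coloring (k := r)
    (s := pairedEndpoint (κ := Fin (r - d)) s t b)
    (t := pairedEndpoint (κ := Fin (r - d)) s t fun e ↦ !b e)
    (card_fiber_pairedEndpoint (by simp [hs, hdr]) (by simp [ht]))
    (card_fiber_pairedEndpoint (by simp [hs, hdr]) (by simp [ht]))
  have separates {z z' : E ⊕ α × Fin (r - d)} (hc : c z = c z')
      (hend : pairedEndpoint s t b z = pairedEndpoint s t b z' ∨
        pairedEndpoint s t (fun e ↦ !b e) z = pairedEndpoint s t (fun e ↦ !b e) z') : z = z' :=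
    hend.elim (fun h ↦ hL (Prod.ext h hc)) fun h ↦ hR (Prod.ext h hc)
  -- No edge of either class at `x` shares its color with a dummy edge at `x`.
  refine ⟨fun e ↦ c (.inl e), fun x ↦ (univ.image fun i ↦ c (.inr (x, i)))ᶜ, fun x ↦ ?_,
    fun e ↦ ?_, fun e e' h ↦ ?_, fun e e' h ↦ ?_⟩
  · have dummy_injective : Injective fun i ↦ c (.inr (x, i)) := fun i j h ↦ by
      simpa using separates h (.inl rfl)
    rw [card_compl, card_image_of_injective _ dummy_injective, card_univ, Fintype.card_fin,
      Fintype.card_fin, Nat.sub_sub_self hdr]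
  · simp only [mem_compl, mem_image, mem_univ, true_and, not_exists]
    intro i h
    exact Sum.inr_ne_inl (separates h (by cases hb : b e <;> simp [pairedEndpoint, hb]))
  · obtain ⟨hse, hbe, hce⟩ := by simpa only [Prod.mk.injEq] using h
    exact Sum.inl_injective <| separates hce
      (by cases hb : b e <;> simp [pairedEndpoint, hb, hbe ▸ hb, hse])
  · obtain ⟨hte, hbe, hce⟩ := by simpa only [Prod.mk.injEq] using h
    exact Sum.inl_injective <| separates hce
      (by cases hb : b e <;> simp [pairedEndpoint, hb, hbe ▸ hb, hte])

theorem exists_paired_palette_coloring {J : Type*} [Fintype J] [Finite α] [Finite β]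
    {s : E → α} {t : E → β} {d r : ℕ} (hdr : d ≤ r)
    (hs : ∀ a, #{e | s e = a} = 2 * Fintype.card J * d)
    (ht : ∀ b, #{e | t e = b} = 2 * Fintype.card J * r) :
    ∃ (c : E → (J × Bool) × Fin r) (P : α → J → Finset (Fin r)), (∀ a j, #(P a j) = d) ∧
      (∀ e, (c e).2 ∈ P (s e) (c e).1.1) ∧
      (Injective fun e ↦ (s e, c e)) ∧ Injective fun e ↦ (t e, c e) := by
  classical
  have card_classes : Fintype.card (J × Bool) = 2 * Fintype.card J := by simp [mul_comm]
  rw [← card_classes] at hs ht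
  obtain ⟨g, hsg, htg⟩ := exists_equitable_edge_coloring hs ht
  obtain ⟨c, P, card_P, mem_P, hsc, htc⟩ := exists_paired_edge_coloring (b := fun e ↦ (g e).2) hdr
    (s := fun e ↦ (s e, (g e).1)) (t := fun e ↦ (t e, (g e).1))
    (fun p ↦ by
      rw [← hsg (p.1.1, p.1.2, p.2)]
      simp [Prod.ext_iff, and_assoc])
    (fun p ↦ by
      rw [← htg (p.1.1, p.1.2, p.2)]
      simp [Prod.ext_iff, and_assoc])
  refine ⟨fun e ↦ (g e, c e), fun a j ↦ P (a, j), fun a j ↦ card_P (a, j), mem_P,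
    fun e e' h ↦ hsc ?_, fun e e' h ↦ htc ?_⟩ <;>
  simp_all

end Multigraph

section Bipartite

variable {V : Type*} {G : SimpleGraph V} {X Y : Set V}

lemma existsUnique_mem_edge (h : G.IsBipartiteWith X Y) (e : G.edgeSet) :
    ∃! x : X, (x : V) ∈ (e : Sym2 V) := by
  obtain ⟨⟨v, w⟩, hvw⟩ := e
  have notMem {u : V} (hu : u ∈ Y) : u ∉ X := Set.disjoint_right.1 h.disjoint hu
  rcases h.mem_of_adj hvw with ⟨hv, hw⟩ | ⟨hv, hw⟩
  · refine ⟨⟨v, hv⟩, Sym2.mem_mk_left v w, ?_⟩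
    rintro ⟨u, hu⟩ hmem
    rcases Sym2.mem_iff.1 hmem with rfl | rfl
    · rfl
    · exact absurd hu (notMem hw)
  · refine ⟨⟨w, hw⟩, Sym2.mem_mk_right v w, ?_⟩
    rintro ⟨u, hu⟩ hmem
    rcases Sym2.mem_iff.1 hmem with rfl | rfl
    · exact absurd hu (notMem hv)
    · rfl

/-- The endpoint in `X` of an edge of a graph with bipartition `X`, `Y`; the endpoint in `Y` is
obtained by passing `h.symm`. -/
noncomputable def endpointIn (h : G.IsBipartiteWith X Y) (e : G.edgeSet) : X :=
  (existsUnique_mem_edge h e).choose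

lemma endpointIn_eq_iff (h : G.IsBipartiteWith X Y) {e : G.edgeSet} {x : X} :
    endpointIn h e = x ↔ (x : V) ∈ (e : Sym2 V) := by
  have hspec := (existsUnique_mem_edge h e).choose_spec
  exact ⟨fun hx ↦ hx ▸ hspec.1, fun hx ↦ (hspec.2 x hx).symm⟩

lemma card_endpointIn_fiber [Fintype V] [DecidableRel G.Adj] [DecidableEq V] [Fintype G.edgeSet]
    (h : G.IsBipartiteWith X Y) (x : X) : #{e | endpointIn h e = x} = G.degree x := by
  rw [← card_incidenceFinset_eq_degree, ← card_map (Embedding.subtype (· ∈ G.edgeSet))]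
  congr 1
  ext e
  simp [endpointIn_eq_iff, mem_incidenceFinset, incidenceSet, and_comm]

lemma eq_of_mem_edges_of_injective {K : Type*} {c : G.edgeSet → K} (h : G.IsBipartiteWith X Y)
    (hc : Injective fun e ↦ (endpointIn h e, c e)) {e e' : G.edgeSet} (hcol : c e = c e')
    {v : V} (hv : v ∈ X) (he : v ∈ (e : Sym2 V)) (he' : v ∈ (e' : Sym2 V)) : e = e' := by
  have hend {f : G.edgeSet} (hf : v ∈ (f : Sym2 V)) : endpointIn h f = ⟨v, hv⟩ :=
    (endpointIn_eq_iff h).2 hf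
  exact hc (Prod.ext ((hend he).trans (hend he').symm) hcol)

end Bipartite

section Palette

variable {V : Type*} {G : SimpleGraph V} {c : Sym2 V → ℕ}

lemma palette_eq_image_neighborSet (G : SimpleGraph V) (c : Sym2 V → ℕ) (v : V) :
    palette G c v = (fun w ↦ c s(v, w)) '' G.neighborSet v := by
  ext n
  constructor
  · rintro ⟨e, he, hv, rfl⟩
    obtain ⟨w, rfl⟩ := Sym2.mem_iff_exists.1 hv
    exact ⟨w, he, rfl⟩
  · rintro ⟨w, hw, rfl⟩
    exact ⟨s(v, w), hw, Sym2.mem_mk_left v w, rfl⟩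

lemma ncard_palette (hc : IsProperEdgeColoring G c) (v : V) [Fintype (G.neighborSet v)] :
    (palette G c v).ncard = G.degree v := by
  have color_injOn : Set.InjOn (fun w ↦ c s(v, w)) (G.neighborSet v) := by
    intro w hw w' hw' heq
    by_contra hne
    exact hc s(v, w) hw s(v, w') hw' (mt Sym2.congr_right.1 hne)
      ⟨v, Sym2.mem_mk_left v w, Sym2.mem_mk_left v w'⟩ heq
  rw [palette_eq_image_neighborSet, color_injOn.ncard_image, ← card_neighborSet_eq_degree,
    Set.ncard_eq_toFinset_card', Set.toFinset_card]

lemma palette_eq_of_subset (hc : IsProperEdgeColoring G c) {v : V} [Fintype (G.neighborSet v)]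
    {S : Finset ℕ} (hsub : palette G c v ⊆ S) (hcard : #S ≤ G.degree v) : palette G c v = S :=
  Set.eq_of_subset_of_ncard_le hsub (by rwa [Set.ncard_coe_finset, ncard_palette hc])

lemma paletteIndex_le_ncard (hc : IsProperEdgeColoring G c) :
    paletteIndex G ≤ (Set.range (palette G c)).ncard :=
  Nat.sInf_le ⟨c, hc, rfl⟩

lemma exists_isProperEdgeColoring [Countable V] (G : SimpleGraph V) :
    ∃ c, IsProperEdgeColoring G c := by
  obtain ⟨c, hc⟩ := Countable.exists_injective_nat (Sym2 V)
  exact ⟨c, fun _ _ _ _ hne _ ↦ hc.ne hne⟩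

lemma exists_ncard_eq_paletteIndex [Countable V] (G : SimpleGraph V) :
    ∃ c, IsProperEdgeColoring G c ∧ (Set.range (palette G c)).ncard = paletteIndex G := by
  obtain ⟨c, hc⟩ := exists_isProperEdgeColoring G
  exact Nat.sInf_mem (s := {k | ∃ c : Sym2 V → ℕ, IsProperEdgeColoring G c ∧
    (Set.range (palette G c)).ncard = k}) ⟨_, c, hc, rfl⟩

lemma exists_palette_eq_map {K : Type*} [Countable K] [G.LocallyFinite]
    {f : G.edgeSet → K} {T : V → Finset K}
    (hf : ∀ v (e e' : G.edgeSet), v ∈ (e : Sym2 V) → v ∈ (e' : Sym2 V) → f e = f e' → e = e')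
    (hT : ∀ v (e : G.edgeSet), v ∈ (e : Sym2 V) → f e ∈ T v)
    (hcard : ∀ v, #(T v) ≤ G.degree v) :
    ∃ (ι : K ↪ ℕ) (c : Sym2 V → ℕ), IsProperEdgeColoring G c ∧
      ∀ v, palette G c v = (T v).map ι := by
  obtain ⟨ι, hι⟩ := Countable.exists_injective_nat K
  let c : Sym2 V → ℕ := extend Subtype.val (ι ∘ f) 0
  have c_apply (e : G.edgeSet) : c e = ι (f e) := Subtype.val_injective.extend_apply _ _ e
  have hc : IsProperEdgeColoring G c := by
    rintro e he e' he' hne ⟨v, hv, hv'⟩ heq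
    rw [c_apply ⟨e, he⟩, c_apply ⟨e', he'⟩] at heq
    exact hne (congrArg Subtype.val (hf v ⟨e, he⟩ ⟨e', he'⟩ hv hv' (hι heq)))
  refine ⟨⟨ι, hι⟩, c, hc, fun v ↦ palette_eq_of_subset hc ?_ ((card_map _).trans_le (hcard v))⟩
  rintro _ ⟨e, he, hv, rfl⟩
  rw [c_apply ⟨e, he⟩]
  exact mem_coe.2 (mem_map_of_mem _ (hT v ⟨e, he⟩ hv))

lemma paletteIndex_le_card_of_forall_mem {K : Type*} [Countable K] [G.LocallyFinite]
    {f : G.edgeSet → K} {T : V → Finset K}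
    (hf : ∀ v (e e' : G.edgeSet), v ∈ (e : Sym2 V) → v ∈ (e' : Sym2 V) → f e = f e' → e = e')
    (hT : ∀ v (e : G.edgeSet), v ∈ (e : Sym2 V) → f e ∈ T v)
    (hcard : ∀ v, #(T v) ≤ G.degree v) {𝒯 : Finset (Finset K)} (h𝒯 : ∀ v, T v ∈ 𝒯) :
    paletteIndex G ≤ #𝒯 := by
  obtain ⟨ι, c, hc, palette_eq⟩ := exists_palette_eq_map hf hT hcard
  have range_subset : Set.range (palette G c) ⊆ (fun S : Finset K ↦ (S.map ι : Set ℕ)) '' 𝒯 := by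
    rintro _ ⟨v, rfl⟩
    exact ⟨T v, h𝒯 v, (palette_eq v).symm⟩
  calc paletteIndex G ≤ (Set.range (palette G c)).ncard := paletteIndex_le_ncard hc
    _ ≤ ((fun S : Finset K ↦ (S.map ι : Set ℕ)) '' 𝒯).ncard :=
        Set.ncard_le_ncard range_subset (𝒯.finite_toSet.image _)
    _ ≤ #𝒯 := (Set.ncard_image_le 𝒯.finite_toSet).trans_eq (Set.ncard_coe_finset 𝒯)

lemma degree_le_mul_card_image_palette [G.LocallyFinite] [DecidableEq (Set ℕ)]
    (hc : IsProperEdgeColoring G c) {v : V} {S : Finset V} {a : ℕ}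
    (hS : ∀ w, G.Adj v w → w ∈ S) (hdeg : ∀ w ∈ S, G.degree w ≤ a) :
    G.degree v ≤ a * #(S.image (palette G c)) := by
  have palette_subset : palette G c v ⊆ ⋃ P ∈ S.image (palette G c), P := by
    rintro _ ⟨e, he, hv, rfl⟩
    obtain ⟨w, rfl⟩ := Sym2.mem_iff_exists.1 hv
    exact Set.mem_biUnion (mem_image_of_mem _ (hS w he)) ⟨_, he, Sym2.mem_mk_right v w, rfl⟩
  have finite_biUnion : (⋃ P ∈ S.image (palette G c), P).Finite := by
    simp only [mem_image, Set.iUnion_exists, Set.biUnion_and', Set.iUnion_iUnion_eq_right]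
    exact S.finite_toSet.biUnion fun w _ ↦ palette_eq_image_neighborSet G c w ▸ Set.toFinite _
  calc G.degree v = (palette G c v).ncard := (ncard_palette hc v).symm
    _ ≤ (⋃ P ∈ S.image (palette G c), P).ncard := Set.ncard_le_ncard palette_subset finite_biUnion
    _ ≤ ∑ P ∈ S.image (palette G c), P.ncard := set_ncard_biUnion_le _ id
    _ ≤ #(S.image (palette G c)) * a := sum_le_card_nsmul _ _ _ <| forall_mem_image.2 fun w hw ↦
        (ncard_palette hc w).trans_le (hdeg w hw)
    _ = a * #(S.image (palette G c)) := mul_comm _ _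

end Palette

section PairedPalette

variable {J K : Type*} [Fintype J] [Fintype K] [DecidableEq K]

/-- The colors available at a vertex of the smaller degree, when each `j : J` names a pair of edge
classes, indexed by `Bool`, that both use the colors in `P j`. -/
def pairedPalette (P : J → Finset K) : Finset ((J × Bool) × K) :=
  {q | q.2 ∈ P q.1.1}

lemma card_pairedPalette (P : J → Finset K) : #(pairedPalette P) = 2 * ∑ j, #(P j) := by
  simp only [pairedPalette, card_filter, Fintype.sum_prod_type, Fintype.sum_bool, mul_sum, two_mul]
  simp only [← card_filter, filter_univ_mem]

/-- The possible palettes when a vertex either sees all colors or is assigned `d` colors from each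
pair of edge classes. -/
def pairedPalettes (J K : Type*) [Fintype J] [Fintype K] [DecidableEq J] [DecidableEq K] (d : ℕ) :
    Finset (Finset ((J × Bool) × K)) :=
  insert univ ((Fintype.piFinset fun _ ↦ powersetCard d univ).image pairedPalette)

lemma card_pairedPalettes_le [DecidableEq J] (d : ℕ) :
    #(pairedPalettes J K d) ≤ (Fintype.card K).choose d ^ Fintype.card J + 1 := by
  refine (card_insert_le _ _).trans (Nat.add_le_add_right (card_image_le.trans_eq ?_) 1)
  simp

lemma pairedPalette_mem_pairedPalettes [DecidableEq J] {P : J → Finset K} {d : ℕ}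
    (hP : ∀ j, #(P j) = d) : pairedPalette P ∈ pairedPalettes J K d :=
  mem_insert_of_mem (mem_image_of_mem _ (by simpa using hP))

end PairedPalette

section Biregular

variable {V : Type*} [Fintype V] {G : SimpleGraph V} [DecidableRel G.Adj]

theorem IsBiregular.add_le_mul_paletteIndex {a b : ℕ} (h : IsBiregular G a b) (hab : a ≠ b) :
    a + b ≤ a * paletteIndex G := by
  classical
  obtain ⟨X, Y, -, ⟨y, hy⟩, hXY, -, hadj, hX, hY⟩ := h
  obtain ⟨c, hc, hcard⟩ := exists_ncard_eq_paletteIndex G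
  have adj_mem (x : V) (hyx : G.Adj y x) : x ∈ X := (hadj y x hyx).elim
    (fun h ↦ absurd hy (Finset.disjoint_left.1 hXY h.1)) And.right
  have le_mul_card : b ≤ a * #(X.image (palette G c)) :=
    hY y hy ▸ degree_le_mul_card_image_palette hc adj_mem fun x hx ↦ (hX x hx).le
  have palette_notMem : palette G c y ∉ X.image (palette G c) := by
    rw [mem_image]
    rintro ⟨x, hx, heq⟩
    exact hab (by rw [← hX x hx, ← hY y hy, ← ncard_palette hc, heq, ncard_palette hc])
  have card_lt : #(X.image (palette G c)) + 1 ≤ paletteIndex G := by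
    rw [← card_insert_of_notMem palette_notMem, ← image_insert, ← hcard, ← Set.ncard_coe_finset,
      coe_image]
    exact Set.ncard_le_ncard (Set.image_subset_range _ _) (Set.finite_range _)
  calc a + b ≤ a + a * #(X.image (palette G c)) := Nat.add_le_add_left le_mul_card a
    _ = a * (#(X.image (palette G c)) + 1) := by ring
    _ ≤ a * paletteIndex G := Nat.mul_le_mul_left a card_lt

theorem IsBiregular.paletteIndex_le {l d r : ℕ} (h : IsBiregular G (2 * l * d) (2 * l * r))
    (hdr : d ≤ r) : paletteIndex G ≤ r.choose d ^ l + 1 := by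
  classical
  obtain ⟨X, Y, -, -, hXY, hcover, hadj, hX, hY⟩ := h
  have hG : G.IsBipartiteWith (X : Set V) Y := ⟨disjoint_coe.2 hXY, fun v w ↦ hadj v w⟩
  obtain ⟨f, P, card_P, mem_P, hfX, hfY⟩ := exists_paired_palette_coloring (J := Fin l) hdr
    (s := endpointIn hG) (t := endpointIn hG.symm)
    (fun x ↦ by rw [card_endpointIn_fiber, hX x x.2, Fintype.card_fin])
    (fun y ↦ by rw [card_endpointIn_fiber, hY y y.2, Fintype.card_fin])
  have separates (v : V) (e e' : G.edgeSet) (he : v ∈ (e : Sym2 V)) (he' : v ∈ (e' : Sym2 V))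
      (hcol : f e = f e') : e = e' := (hcover v).elim
    (fun hv ↦ eq_of_mem_edges_of_injective hG hfX hcol hv he he')
    fun hv ↦ eq_of_mem_edges_of_injective hG.symm hfY hcol hv he he'
  let T (v : V) := if hv : v ∈ X then pairedPalette (P ⟨v, hv⟩) else univ
  have T_of_mem {v : V} (hv : v ∈ X) : T v = pairedPalette (P ⟨v, hv⟩) := dif_pos hv
  have T_of_notMem {v : V} (hv : v ∉ X) : T v = univ := dif_neg hv
  refine (paletteIndex_le_card_of_forall_mem (T := T) (𝒯 := pairedPalettes (Fin l) (Fin r) d)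
    separates (fun v e he ↦ ?_) (fun v ↦ ?_) fun v ↦ ?_).trans ?_
  · by_cases hv : v ∈ X
    · have endpoint_eq : endpointIn hG e = ⟨v, hv⟩ := (endpointIn_eq_iff hG).2 he
      rw [T_of_mem hv, pairedPalette, mem_filter_univ, ← endpoint_eq]
      exact mem_P e
    · exact T_of_notMem hv ▸ mem_univ _
  · by_cases hv : v ∈ X
    · simp [T_of_mem hv, card_pairedPalette, card_P, hX v hv, mul_assoc]
    · simp [T_of_notMem hv, hY v ((hcover v).resolve_left hv), mul_comm]
  · by_cases hv : v ∈ X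
    · exact T_of_mem hv ▸ pairedPalette_mem_pairedPalettes (card_P _)
    · exact T_of_notMem hv ▸ mem_insert_self _ _
  · simpa using card_pairedPalettes_le (J := Fin l) (K := Fin r) d

theorem palette_index_four_biregular_general {l d r : ℕ} (hl : 0 < l) (hdr : d < r)
    (h : IsBiregular G (2 * l * d) (2 * l * r)) :
    d + r ≤ d * paletteIndex G ∧ paletteIndex G ≤ r.choose d ^ l + 1 := by
  refine ⟨?_, h.paletteIndex_le hdr.le⟩
  have hpos : 0 < 2 * l := by positivity
  refine Nat.le_of_mul_le_mul_left ?_ hpos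
  rw [mul_add, ← mul_assoc]
  exact h.add_le_mul_paletteIndex (Nat.mul_lt_mul_of_pos_left hdr hpos).ne

end Biregular

/-- (i) If `G` is `(4,4r)`-biregular (`r ≥ 2`), then `r + 1 ≤ š(G) ≤ r² + 1`;
(ii) if `G` is `(4r−4,4r)`-biregular (`r ≥ 2`), then `š(G) ≤ r² + 1`. -/
theorem palette_index_four_biregular {V : Type*} [Fintype V]
    (G : SimpleGraph V) [DecidableRel G.Adj] (r : ℕ) (hr : 2 ≤ r) :
    (IsBiregular G 4 (4 * r) →
      r + 1 ≤ paletteIndex G ∧ paletteIndex G ≤ r ^ 2 + 1) ∧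
    (IsBiregular G (4 * r - 4) (4 * r) → paletteIndex G ≤ r ^ 2 + 1) := by
  refine ⟨fun h ↦ ?_, fun h ↦ ?_⟩
  · simpa [add_comm] using palette_index_four_biregular_general (l := 2) (d := 1) two_pos hr h
  · rw [← Nat.mul_sub_one] at h
    have choose_pred : r.choose (r - 1) = r := by
      rw [Nat.choose_symm (by lia), Nat.choose_one_right]
    simpa [choose_pred] using
      (palette_index_four_biregular_general (l := 2) two_pos (by lia : r - 1 < r) h).2
end

section
/- If G is a (3,5)-biregular bipartite graph, then 5 ≤ š(G) ≤ 7. -/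
open SimpleGraph Finset

/-!
Let `X` be the vertices of degree `3` and `Y` those of degree `5`, so that `3 * #X = 5 * #Y`.

*Lower bound.* The edges of one color form a matching, so each color is seen by equally many
vertices of `X` and of `Y`. Since `#Y < #X`, no color lies in all palettes of `X`, which gives at
least two palettes there. Since `#X < 2 * #Y`, once more than three colors are common to all
palettes of `Y`, each of them lies in two different palettes of `X`; counting pairs (color,
palette of `X`) then forces four palettes on `X` if `Y` has only one, and three if `Y` has only two.

*Upper bound.* Hall's theorem yields a matching saturating `Y`; give it color `4`. The remaining
graph has maximum degree `4` and can be edge-colored with the pairs `{0, 1}` and `{2, 3}` in such a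
way that the vertices of degree at most `2` in `X` only see one of the pairs. This leaves one
palette on `Y`, two at the matched vertices of `X`, and the four `3`-subsets of `{0, 1, 2, 3}`.
The paired coloring comes from repeatedly splitting the edges in two, balanced at every vertex: pair
up the edges at each vertex, leaving out at most one; the two pairings are involutions of the edge
set, and any two involutions admit a `2`-coloring that both reverse off their fixed points.
-/

section Involutions

variable {E A : Type*}

theorem exists_bool_alternating_of_involutive {f : E → E} (hf : Function.Involutive f)
    (hne : ∀ e, f e ≠ e) : ∃ s : E → Bool, ∀ e, s (f e) = !s e := by
  classical
  let _ : LinearOrder E := linearOrderOfSTO WellOrderingRel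
  refine ⟨fun e ↦ decide (e < f e), fun e ↦ ?_⟩
  rcases lt_or_gt_of_ne (hne e) with h | h <;> simp [hf e, h, not_lt_of_gt h]

theorem conj_mul_eq_inv_of_mul_self {Γ : Type*} [Group Γ] {x y : Γ} (hx : x * x = 1)
    (hy : y * y = 1) : x * (x * y) * x⁻¹ = (x * y)⁻¹ := by
  rw [mul_inv_rev, inv_eq_of_mul_eq_one_left hy, ← mul_assoc, hx, one_mul]

theorem apply_zpow_mul_of_mul_self {F H : Equiv.Perm E} (hF : F * F = 1) (hH : H * H = 1)
    (k : ℤ) (e : E) : F (((F * H) ^ k) e) = ((F * H) ^ (-k)) (F e) := by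
  have hconj : F * (F * H) ^ k * F⁻¹ = (F * H) ^ (-k) := by
    rw [← conj_zpow, conj_mul_eq_inv_of_mul_self hF hH, inv_zpow, zpow_neg]
  simp [← hconj]

-- If `(F * H) ^ k` sends `e` to `F e`, the fixed point lies halfway between `e` and `F e`.
theorem exists_fixed_of_sameCycle_mul {F H : Equiv.Perm E} (hF : F * F = 1) (hH : H * H = 1)
    {e : E} (he : (F * H).SameCycle e (F e)) : ∃ z, F z = z ∨ H z = z := by
  obtain ⟨k, hk⟩ := he
  obtain ⟨j, rfl | rfl⟩ := Int.even_or_odd' k <;> refine ⟨((F * H) ^ j) e, ?_⟩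
  · left
    rw [apply_zpow_mul_of_mul_self hF hH, ← hk, ← Equiv.Perm.mul_apply, ← zpow_add]
    congr 2
    ring
  · right
    apply F.injective
    rw [apply_zpow_mul_of_mul_self hF hH, ← hk, ← Equiv.Perm.mul_apply F H,
      ← Equiv.Perm.mul_apply (F * H), ← Equiv.Perm.mul_apply ((F * H) ^ (-j)), ← zpow_one_add,
      ← zpow_add]
    congr 2
    ring

-- `f` permutes the cycles of `f ∘ g` without fixing any of them, while `g` acts on the cycles
-- as `f` does.
theorem exists_bool_alternating_of_involutive_pair {f g : E → E} (hf : Function.Involutive f)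
    (hg : Function.Involutive g) (hfne : ∀ e, f e ≠ e) (hgne : ∀ e, g e ≠ e) :
    ∃ s : E → Bool, ∀ e, s (f e) = !s e ∧ s (g e) = !s e := by
  let F := hf.toPerm
  let H := hg.toPerm
  have hF : F * F = 1 := Equiv.ext hf
  have hH : H * H = 1 := Equiv.ext hg
  let cycles := Equiv.Perm.SameCycle.setoid (F * H)
  have map_rel (a b : E) (hab : cycles a b) : cycles (f a) (f b) := by
    obtain ⟨k, rfl⟩ := hab
    exact ⟨-k, (apply_zpow_mul_of_mul_self hF hH k a).symm⟩
  let fbar : Quotient cycles → Quotient cycles := Quotient.map f map_rel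
  have fbar_involutive : Function.Involutive fbar := by
    rintro ⟨e⟩
    exact congrArg _ (hf e)
  have fbar_ne : ∀ q, fbar q ≠ q := by
    rintro ⟨e⟩ h
    obtain ⟨z, hz | hz⟩ := exists_fixed_of_sameCycle_mul hF hH (Quotient.exact h).symm
    exacts [hfne z hz, hgne z hz]
  obtain ⟨s, hs⟩ := exists_bool_alternating_of_involutive fbar_involutive fbar_ne
  have hsf (e : E) : s ⟦f e⟧ = !s ⟦e⟧ := hs ⟦e⟧
  have mk_fg (e : E) : (⟦f (g e)⟧ : Quotient cycles) = ⟦e⟧ :=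
    Quotient.sound (Equiv.Perm.SameCycle.symm ⟨1, rfl⟩)
  refine ⟨fun e ↦ s ⟦e⟧, fun e ↦ ⟨hsf e, ?_⟩⟩
  change s ⟦g e⟧ = !s ⟦e⟧
  rw [← mk_fg e, hsf, Bool.not_not]

theorem exists_involutive_lift_forall_ne {f : E → E} (hf : Function.Involutive f) :
    ∃ F : E × Bool → E × Bool, Function.Involutive F ∧ (∀ z, F z ≠ z) ∧
      ∀ e, f e ≠ e → F (e, true) = (f e, true) := by
  classical
  refine ⟨fun z ↦ if f z.1 = z.1 then (z.1, !z.2) else (f z.1, z.2), ?_, ?_, ?_⟩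
  · rintro ⟨e, b⟩
    by_cases h : f e = e
    · simp [h]
    · simp [h, hf e, Ne.symm h]
  · rintro ⟨e, b⟩
    by_cases h : f e = e <;> simp [h]
  · intro e h
    simp [h]

theorem exists_bool_alternating_off_fixed {f g : E → E} (hf : Function.Involutive f)
    (hg : Function.Involutive g) :
    ∃ s : E → Bool, ∀ e, (f e ≠ e → s (f e) = !s e) ∧ (g e ≠ e → s (g e) = !s e) := by
  obtain ⟨F, hF, hFne, hFf⟩ := exists_involutive_lift_forall_ne hf
  obtain ⟨H, hH, hHne, hHg⟩ := exists_involutive_lift_forall_ne hg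
  obtain ⟨s, hs⟩ := exists_bool_alternating_of_involutive_pair hF hH hFne hHne
  exact ⟨fun e ↦ s (e, true), fun e ↦ ⟨fun h ↦ (congrArg s (hFf e h)).symm.trans (hs _).1,
    fun h ↦ (congrArg s (hHg e h)).symm.trans (hs _).2⟩⟩

theorem exists_involutive_fixed_unique (E : Type*) [Finite E] :
    ∃ f : E → E, Function.Involutive f ∧ ∀ a b, f a = a → f b = b → a = b := by
  obtain ⟨n, ⟨φ⟩⟩ := Finite.exists_equiv_fin E
  refine ⟨fun e ↦ φ.symm (φ e).rev, fun e ↦ by simp, fun a b ha hb ↦ φ.injective ?_⟩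
  rw [Equiv.symm_apply_eq, Fin.ext_iff, Fin.val_rev] at ha hb
  ext
  omega

theorem exists_involutive_fixed_unique_on_fibers [Finite E] (p : E → A) :
    ∃ f : E → E, Function.Involutive f ∧ (∀ e, p (f e) = p e) ∧
      ∀ a b, p a = p b → f a = a → f b = b → a = b := by
  choose g hg hfix using fun a ↦ exists_involutive_fixed_unique {e // p e = a}
  let f (e : E) : E := g (p e) ⟨e, rfl⟩
  have f_coe (a : A) (z : {e // p e = a}) : f z = g a z := by
    obtain ⟨e, rfl⟩ := z
    rfl
  refine ⟨f, fun e ↦ ?_, fun e ↦ (g (p e) ⟨e, rfl⟩).2, fun a b hab ha hb ↦ ?_⟩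
  · rw [f_coe (p e) (g (p e) ⟨e, rfl⟩), hg]
  · exact congrArg Subtype.val (hfix (p b) ⟨a, hab⟩ ⟨b, rfl⟩
      (Subtype.ext ((f_coe _ ⟨a, hab⟩).symm.trans ha)) (Subtype.ext hb))

end Involutions

section BalancedColorings

variable {E A B : Type*}

/-- The `2`-coloring `s` splits every fiber of `p` into two classes whose sizes differ by at most
one. Regarding `E` as the edge set of a multigraph and `p` as the endpoint map on one side of a
bipartition, `s` is a balanced edge coloring at all vertices of that side. -/
def IsBalancedOnFibers (p : E → A) (s : E → Bool) : Prop :=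
  ∀ a b, 2 * ((fun e ↦ (p e, s e)) ⁻¹' {(a, b)}).ncard ≤ (p ⁻¹' {a}).ncard + 1

theorem ncard_fiber_eq_add [Finite E] (p : E → A) (s : E → Bool) (a : A) (b : Bool) :
    (p ⁻¹' {a}).ncard = ((fun e ↦ (p e, s e)) ⁻¹' {(a, b)}).ncard +
      ((fun e ↦ (p e, s e)) ⁻¹' {(a, !b)}).ncard := by
  rw [← Set.ncard_union_eq]
  · congr 1
    ext e
    cases h : s e <;> cases b <;> simp [h]
  · rw [Set.disjoint_left]
    rintro e h h'
    simp_all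

theorem isBalancedOnFibers_of_alternating [Finite E] {p : E → A} {s : E → Bool} {f : E → E}
    (hf : Function.Involutive f) (hpf : ∀ e, p (f e) = p e)
    (hfix : ∀ a b, p a = p b → f a = a → f b = b → a = b)
    (hs : ∀ e, f e ≠ e → s (f e) = !s e) : IsBalancedOnFibers p s := by
  intro a b
  set K := (fun e ↦ (p e, s e)) ⁻¹' {(a, b)}
  set L := (fun e ↦ (p e, s e)) ⁻¹' {(a, !b)}
  have hsub : K ⊆ f '' L ∪ K ∩ {e | f e = e} := by
    intro e he
    by_cases hfe : f e = e
    · exact Or.inr ⟨he, hfe⟩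
    · obtain ⟨hpe, hse⟩ : p e = a ∧ s e = b := by simpa [K] using he
      exact Or.inl ⟨f e, by simp [L, hpf, hs e hfe, hpe, hse], hf e⟩
  have hfixed : (K ∩ {e | f e = e}).ncard ≤ 1 := by
    rw [Set.ncard_le_one]
    rintro x ⟨hx, hfx⟩ y ⟨hy, hfy⟩
    refine hfix x y ?_ hfx hfy
    simp_all [K]
  have hK : K.ncard ≤ L.ncard + 1 := calc
    K.ncard ≤ (f '' L ∪ K ∩ {e | f e = e}).ncard := Set.ncard_le_ncard hsub
    _ ≤ (f '' L).ncard + (K ∩ {e | f e = e}).ncard := Set.ncard_union_le _ _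
    _ ≤ L.ncard + 1 := add_le_add (Set.ncard_image_le) hfixed
  have hsum : (p ⁻¹' {a}).ncard = K.ncard + L.ncard := ncard_fiber_eq_add p s a b
  omega

theorem exists_isBalancedOnFibers_pair [Finite E] (p : E → A) (q : E → B) :
    ∃ s : E → Bool, IsBalancedOnFibers p s ∧ IsBalancedOnFibers q s := by
  obtain ⟨f, hf, hpf, hffix⟩ := exists_involutive_fixed_unique_on_fibers p
  obtain ⟨g, hg, hqg, hgfix⟩ := exists_involutive_fixed_unique_on_fibers q
  obtain ⟨s, hs⟩ := exists_bool_alternating_off_fixed hf hg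
  exact ⟨s, isBalancedOnFibers_of_alternating hf hpf hffix fun e ↦ (hs e).1,
    isBalancedOnFibers_of_alternating hg hqg hgfix fun e ↦ (hs e).2⟩

theorem IsBalancedOnFibers.ncard_fiber_le {p : E → A} {s : E → Bool}
    (h : IsBalancedOnFibers p s) {a : A} {k : ℕ} (hk : (p ⁻¹' {a}).ncard ≤ 2 * k) (b : Bool) :
    ((fun e ↦ (p e, s e)) ⁻¹' {(a, b)}).ncard ≤ k := by
  have := h a b
  omega

theorem IsBalancedOnFibers.eq_of_eq [Finite E] {p : E → A} {s : E → Bool}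
    (h : IsBalancedOnFibers p s) {e e' : E} (h2 : (p ⁻¹' {p e}).ncard ≤ 2)
    (hp : p e = p e') (hs : s e = s e') : e = e' :=
  (Set.ncard_le_one).1 (h.ncard_fiber_le (k := 1) h2 (s e)) e (by simp) e' (by simp [hp, hs])

theorem ncard_le_two_of_injOn_bool {S : Set E} {o : E → Bool} (ho : Set.InjOn o S) :
    S.ncard ≤ 2 := by
  rw [← ho.ncard_image]
  exact (Set.ncard_le_card _).trans_eq (by simp)

-- Split by `o`, then by `t`, where the second step splits the parts of the first one but keeps the
-- small fibers of `q` whole, and take `s = t xor o`: distinct elements of a small fiber of `q` are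
-- separated by both `o` and `t`, hence not by `s`.
theorem exists_halving_constant_on_small_fibers [Finite E] {p : E → A} {q : E → B}
    (hp : ∀ a, (p ⁻¹' {a}).ncard ≤ 4) (hq : ∀ b, (q ⁻¹' {b}).ncard ≤ 4) :
    ∃ s : E → Bool, (∀ z, ((fun e ↦ (p e, s e)) ⁻¹' {z}).ncard ≤ 2) ∧
      (∀ z, ((fun e ↦ (q e, s e)) ⁻¹' {z}).ncard ≤ 2) ∧
      ∀ e e', (q ⁻¹' {q e}).ncard ≤ 2 → q e = q e' → s e = s e' := by
  classical
  let small (b : B) : Prop := (q ⁻¹' {b}).ncard ≤ 2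
  obtain ⟨o, hpo, hqo⟩ := exists_isBalancedOnFibers_pair p q
  let q' (e : E) : B × Bool := (q e, if small (q e) then false else o e)
  obtain ⟨t, hpt, hqt⟩ := exists_isBalancedOnFibers_pair (fun e ↦ (p e, o e)) q'
  have hp_inj {e e' : E} (h : p e = p e') (ho : o e = o e') (ht : t e = t e') : e = e' :=
    hpt.eq_of_eq (hpo.ncard_fiber_le (k := 2) (hp _) _) (Prod.ext h ho) ht
  have hq'_fiber (e : E) : (q' ⁻¹' {q' e}).ncard ≤ 2 := by
    by_cases he : small (q e)
    · refine (Set.ncard_le_ncard fun z hz ↦ ?_).trans he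
      exact congrArg Prod.fst hz
    · refine (Set.ncard_le_ncard fun z hz ↦ ?_).trans (hqo.ncard_fiber_le (k := 2) (hq (q e)) (o e))
      have hqz : q z = q e := congrArg Prod.fst hz
      simpa [q', hqz, he] using hz
  have hq'_inj {e e' : E} (h : q' e = q' e') (ht : t e = t e') : e = e' :=
    hqt.eq_of_eq (hq'_fiber e) h ht
  refine ⟨fun e ↦ xor (t e) (o e), fun ⟨a, b⟩ ↦ ?_, fun ⟨a, b⟩ ↦ ?_, fun e e' he h ↦ ?_⟩
  · refine ncard_le_two_of_injOn_bool (o := o) fun x hx y hy ho ↦ ?_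
    simp only [Set.mem_preimage, Set.mem_singleton_iff, Prod.mk.injEq] at hx hy
    exact hp_inj (hx.1.trans hy.1.symm) ho (by simpa [ho] using hx.2.trans hy.2.symm)
  · by_cases ha : small a
    · exact (Set.ncard_le_ncard fun z hz ↦ congrArg Prod.fst hz).trans ha
    · refine ncard_le_two_of_injOn_bool (o := o) fun x hx y hy ho ↦ ?_
      simp only [Set.mem_preimage, Set.mem_singleton_iff, Prod.mk.injEq] at hx hy
      exact hq'_inj (by simp [q', hx.1, hy.1, ho]) (by simpa [ho] using hx.2.trans hy.2.symm)
  · by_cases hee : e = e'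
    · rw [hee]
    · have ho : o e ≠ o e' := fun ho ↦ hee (hqo.eq_of_eq he h ho)
      have ht : t e ≠ t e' := fun ht ↦ hee (hq'_inj (by simp [q', ← h, small, he]) ht)
      simp [Bool.eq_not_of_ne ho, Bool.eq_not_of_ne ht]

theorem exists_paired_coloring [Finite E] {p : E → A} {q : E → B}
    (hp : ∀ a, (p ⁻¹' {a}).ncard ≤ 4) (hq : ∀ b, (q ⁻¹' {b}).ncard ≤ 4) :
    ∃ s r : E → Bool, (∀ e e', p e = p e' → s e = s e' → r e = r e' → e = e') ∧
      (∀ e e', q e = q e' → s e = s e' → r e = r e' → e = e') ∧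
      ∀ e e', (q ⁻¹' {q e}).ncard ≤ 2 → q e = q e' → s e = s e' := by
  obtain ⟨s, hps, hqs, hs⟩ := exists_halving_constant_on_small_fibers hp hq
  obtain ⟨r, hpr, hqr⟩ :=
    exists_isBalancedOnFibers_pair (fun e ↦ (p e, s e)) (fun e ↦ (q e, s e))
  exact ⟨s, r, fun _ _ h hse hre ↦ hpr.eq_of_eq (hps _) (Prod.ext h hse) hre,
    fun _ _ h hse hre ↦ hqr.eq_of_eq (hqs _) (Prod.ext h hse) hre, hs⟩

end BalancedColorings

section Palettes

variable {V : Type*} {G : SimpleGraph V} {c : Sym2 V → ℕ}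

theorem isProperEdgeColoring_iff :
    IsProperEdgeColoring G c ↔
      ∀ v a b, G.Adj v a → G.Adj v b → c s(v, a) = c s(v, b) → a = b := by
  constructor
  · intro h v a b ha hb hab
    by_contra hne
    exact h s(v, a) ha s(v, b) hb (fun h' ↦ hne (Sym2.congr_right.1 h')) ⟨v, by simp⟩ hab
  · rintro h e₁ h₁ e₂ h₂ hne ⟨v, hv₁, hv₂⟩ hc
    obtain ⟨a, rfl⟩ := Sym2.mem_iff_exists.1 hv₁
    obtain ⟨b, rfl⟩ := Sym2.mem_iff_exists.1 hv₂
    exact hne (by rw [h v a b h₁ h₂ hc])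

theorem mem_palette_iff {v : V} {n : ℕ} :
    n ∈ palette G c v ↔ ∃ w, G.Adj v w ∧ c s(v, w) = n := by
  constructor
  · rintro ⟨e, he, hv, hn⟩
    obtain ⟨w, rfl⟩ := Sym2.mem_iff_exists.1 hv
    exact ⟨w, he, hn⟩
  · rintro ⟨w, hw, hn⟩
    exact ⟨s(v, w), hw, by simp, hn⟩

theorem finite_palette [Finite V] (G : SimpleGraph V) (c : Sym2 V → ℕ) (v : V) :
    (palette G c v).Finite := by
  refine (Set.finite_range fun w ↦ c s(v, w)).subset fun n hn ↦ ?_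
  obtain ⟨w, -, hw⟩ := mem_palette_iff.1 hn
  exact ⟨w, hw⟩

/-- The palette of `v` as a `Finset`, so that palettes can be counted and intersected. -/
noncomputable def paletteFinset [Finite V] (G : SimpleGraph V) (c : Sym2 V → ℕ) (v : V) :
    Finset ℕ :=
  (finite_palette G c v).toFinset

theorem mem_paletteFinset [Finite V] {v : V} {n : ℕ} :
    n ∈ paletteFinset G c v ↔ ∃ w, G.Adj v w ∧ c s(v, w) = n := by
  rw [paletteFinset, Set.Finite.mem_toFinset, mem_palette_iff]

theorem paletteFinset_subset_range [Finite V] {k : ℕ} (hc : ∀ e, c e < k) (v : V) :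
    paletteFinset G c v ⊆ range k := by
  intro n hn
  obtain ⟨w, -, rfl⟩ := mem_paletteFinset.1 hn
  exact mem_range.2 (hc _)

theorem IsProperEdgeColoring.card_paletteFinset [Finite V] (hc : IsProperEdgeColoring G c) (v : V)
    [Fintype (G.neighborSet v)] : #(paletteFinset G c v) = G.degree v := by
  have himage : paletteFinset G c v = (G.neighborFinset v).image fun w ↦ c s(v, w) := by
    ext n
    simp [mem_paletteFinset]
  rw [himage, card_image_of_injOn, card_neighborFinset_eq_degree]
  intro a ha b hb hab
  exact isProperEdgeColoring_iff.1 hc v a b (by simpa using ha) (by simpa using hb) hab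

theorem ncard_range_palette [Fintype V] (G : SimpleGraph V) (c : Sym2 V → ℕ) :
    (Set.range (palette G c)).ncard = #(univ.image (paletteFinset G c)) := by
  have hcomp : palette G c = (fun P : Finset ℕ ↦ (P : Set ℕ)) ∘ paletteFinset G c := by
    funext v
    exact (Set.Finite.coe_toFinset _).symm
  rw [hcomp, Set.range_comp, Set.ncard_image_of_injective _ coe_injective, ← Set.ncard_coe_finset,
    coe_image, coe_univ, Set.image_univ]

theorem paletteIndex_le [Fintype V] (hc : IsProperEdgeColoring G c) :
    paletteIndex G ≤ #(univ.image (paletteFinset G c)) :=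
  Nat.sInf_le ⟨c, hc, ncard_range_palette G c⟩

theorem exists_paletteIndex_eq [Fintype V] (h : ∃ c, IsProperEdgeColoring G c) :
    ∃ c, IsProperEdgeColoring G c ∧ #(univ.image (paletteFinset G c)) = paletteIndex G := by
  obtain ⟨c, hc⟩ := h
  obtain ⟨c', hc', hcard⟩ := Nat.sInf_mem
    (s := {k | ∃ c, IsProperEdgeColoring G c ∧ (Set.range (palette G c)).ncard = k}) ⟨_, c, hc, rfl⟩
  exact ⟨c', hc', (ncard_range_palette G c').symm.trans hcard⟩

theorem IsBiregular.exists_isBipartiteWith [Fintype V] [DecidableRel G.Adj] {a b : ℕ}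
    (hG : IsBiregular G a b) :
    ∃ X Y : Finset V, Y.Nonempty ∧ G.IsBipartiteWith X Y ∧ (∀ v, v ∈ X ∨ v ∈ Y) ∧
      (∀ x ∈ X, G.degree x = a) ∧ ∀ y ∈ Y, G.degree y = b := by
  obtain ⟨X, Y, -, hYne, hdisj, hcover, hadj, hX, hY⟩ := hG
  exact ⟨X, Y, hYne, ⟨disjoint_coe.2 hdisj, fun v w hvw ↦ hadj v w hvw⟩, hcover, hX, hY⟩

end Palettes

section LowerBound

variable {V α : Type*} [DecidableEq α] {X Y : Finset V} {pal : V → Finset α}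

/-- Every color occurs in as many palettes (counted with multiplicity) on `X` as on `Y`. Palettes
of a proper edge coloring of a bipartite graph with parts `X` and `Y` satisfy this, because the
edges of one color form a matching. -/
def IsColorBalanced (X Y : Finset V) (pal : V → Finset α) : Prop :=
  ∀ n, #{x ∈ X | n ∈ pal x} = #{y ∈ Y | n ∈ pal y}

theorem IsColorBalanced.two_le_card_image (h : IsColorBalanced X Y pal) (hXY : #Y < #X)
    (hne : ∀ x ∈ X, (pal x).Nonempty) : 2 ≤ #(X.image pal) := by
  by_contra! hlt
  have hconst := card_le_one.1 (Nat.le_of_lt_succ hlt)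
  obtain ⟨x₀, hx₀⟩ := card_pos.1 (Nat.zero_lt_of_lt hXY)
  obtain ⟨n, hn⟩ := hne x₀ hx₀
  have hall : {x ∈ X | n ∈ pal x} = X := filter_true_of_mem fun x hx ↦
    hconst _ (mem_image_of_mem pal hx₀) _ (mem_image_of_mem pal hx) ▸ hn
  have hle := card_filter_le Y (n ∈ pal ·)
  rw [← h n, hall] at hle
  exact hle.not_gt hXY

theorem IsColorBalanced.subset_biUnion_image (h : IsColorBalanced X Y pal) {y : V} (hy : y ∈ Y) :
    pal y ⊆ (X.image pal).biUnion id := by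
  intro n hn
  have hpos : 0 < #{x ∈ X | n ∈ pal x} := by
    rw [h n]
    exact card_pos.2 ⟨y, mem_filter.2 ⟨hy, hn⟩⟩
  obtain ⟨x, hx⟩ := card_pos.1 hpos
  rw [mem_filter] at hx
  exact mem_biUnion.2 ⟨pal x, mem_image_of_mem pal hx.1, hx.2⟩

-- If `n` lay in a single palette `A` and `m ∈ S \ A`, then the vertices of `X` seeing `n` and those
-- seeing `m` would form two disjoint sets of size `#Y`.
theorem IsColorBalanced.two_le_card_filter_mem (h : IsColorBalanced X Y pal) (hXY : #X < 2 * #Y)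
    {k : ℕ} (hX : ∀ x ∈ X, #(pal x) ≤ k) {S : Finset α} (hS : ∀ y ∈ Y, S ⊆ pal y) (hk : k < #S)
    {n : α} (hn : n ∈ S) : 2 ≤ #{A ∈ X.image pal | n ∈ A} := by
  classical
  have hcount {m : α} (hm : m ∈ S) : #{x ∈ X | m ∈ pal x} = #Y := by
    rw [h m, filter_true_of_mem fun y hy ↦ hS y hy hm]
  by_contra! hlt
  have hunique := card_le_one.1 (Nat.le_of_lt_succ hlt)
  obtain ⟨x₀, hx₀⟩ := card_pos.1 (show 0 < #{x ∈ X | n ∈ pal x} by rw [hcount hn]; omega)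
  rw [mem_filter] at hx₀
  obtain ⟨m, hm, hmx₀⟩ := exists_mem_notMem_of_card_lt_card ((hX x₀ hx₀.1).trans_lt hk)
  have hpal {x : V} (hx : x ∈ X) (hnx : n ∈ pal x) : pal x = pal x₀ :=
    hunique _ (mem_filter.2 ⟨mem_image_of_mem pal hx, hnx⟩)
      _ (mem_filter.2 ⟨mem_image_of_mem pal hx₀.1, hx₀.2⟩)
  have hdisj : Disjoint {x ∈ X | n ∈ pal x} {x ∈ X | m ∈ pal x} :=
    disjoint_filter.2 fun x hx hnx hmx ↦ hmx₀ (hpal hx hnx ▸ hmx)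
  have hle := card_le_card <|
    union_subset (filter_subset (n ∈ pal ·) X) (filter_subset (m ∈ pal ·) X)
  rw [card_union_of_disjoint hdisj, hcount hn, hcount hm] at hle
  omega

theorem IsColorBalanced.card_mul_two_le (h : IsColorBalanced X Y pal) (hXY : #X < 2 * #Y) {k : ℕ}
    (hX : ∀ x ∈ X, #(pal x) ≤ k) {S : Finset α} (hS : ∀ y ∈ Y, S ⊆ pal y) (hk : k < #S) :
    #S * 2 ≤ #(X.image pal) * k := by
  refine card_mul_le_card_mul (fun (n : α) (A : Finset α) ↦ n ∈ A)
    (fun n hn ↦ h.two_le_card_filter_mem hXY hX hS hk hn) fun A hA ↦ ?_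
  obtain ⟨x, hx, rfl⟩ := mem_image.1 hA
  exact (card_le_card fun n hn ↦ (mem_filter.1 hn).2).trans (hX x hx)

theorem IsColorBalanced.three_le_card_image_of_image_eq_pair (h : IsColorBalanced X Y pal)
    (hXY : #X < 2 * #Y) (hX : ∀ x ∈ X, #(pal x) = 3) (hY : ∀ y ∈ Y, #(pal y) = 5)
    {B B' : Finset α} (hBB' : Y.image pal = {B, B'}) : 3 ≤ #(X.image pal) := by
  obtain ⟨y, hy, rfl⟩ := mem_image.1 (show B ∈ Y.image pal by simp [hBB'])
  obtain ⟨y', hy', rfl⟩ := mem_image.1 (show B' ∈ Y.image pal by simp [hBB'])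
  by_contra! hlt
  have hunion : #(pal y ∪ pal y') ≤ #(X.image pal) * 3 := by
    refine (card_le_card (union_subset (h.subset_biUnion_image hy)
      (h.subset_biUnion_image hy'))).trans (card_biUnion_le_card_mul _ _ _ fun A hA ↦ ?_)
    obtain ⟨x, hx, rfl⟩ := mem_image.1 hA
    exact (hX x hx).le
  have hsum := card_union_add_card_inter (pal y) (pal y')
  rw [hY y hy, hY y' hy'] at hsum
  have hcommon : ∀ z ∈ Y, pal y ∩ pal y' ⊆ pal z := by
    intro z hz
    have hz' : pal z = pal y ∨ pal z = pal y' := by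
      simpa [hBB'] using mem_image_of_mem pal hz
    rcases hz' with hz' | hz' <;> rw [hz']
    exacts [inter_subset_left, inter_subset_right]
  have := h.card_mul_two_le hXY (fun x hx ↦ (hX x hx).le) hcommon (by omega)
  omega

theorem IsColorBalanced.five_le_card_image_add_card_image (h : IsColorBalanced X Y pal)
    (hYX : #Y < #X) (hXY : #X < 2 * #Y) (hX : ∀ x ∈ X, #(pal x) = 3)
    (hY : ∀ y ∈ Y, #(pal y) = 5) : 5 ≤ #(X.image pal) + #(Y.image pal) := by
  have hXtwo : 2 ≤ #(X.image pal) :=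
    h.two_le_card_image hYX fun x hx ↦ card_pos.1 (by rw [hX x hx]; norm_num)
  obtain ⟨y, hy⟩ : Y.Nonempty := card_pos.1 (by omega)
  have hYpos : 0 < #(Y.image pal) := card_pos.2 ⟨pal y, mem_image_of_mem pal hy⟩
  obtain hone | htwo | hthree : #(Y.image pal) = 1 ∨ #(Y.image pal) = 2 ∨ 3 ≤ #(Y.image pal) := by
    omega
  · have hconst := card_le_one.1 hone.le
    have := h.card_mul_two_le hXY (fun x hx ↦ (hX x hx).le) (S := pal y)
      (fun z hz ↦ (hconst _ (mem_image_of_mem pal hy) _ (mem_image_of_mem pal hz)).subset)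
      (by rw [hY y hy]; norm_num)
    rw [hY y hy] at this
    omega
  · obtain ⟨B, B', -, hBB'⟩ := card_eq_two.1 htwo
    have := h.three_le_card_image_of_image_eq_pair hXY hX hY hBB'
    omega
  · omega

variable {G : SimpleGraph V} {c : Sym2 V → ℕ}

theorem IsProperEdgeColoring.card_filter_mem_paletteFinset_le [Finite V]
    (hc : IsProperEdgeColoring G c) (hXY : G.IsBipartiteWith X Y) (n : ℕ) :
    #{x ∈ X | n ∈ paletteFinset G c x} ≤ #{y ∈ Y | n ∈ paletteFinset G c y} := by
  refine card_le_card_of_forall_subsingleton (fun x y ↦ G.Adj x y ∧ c s(x, y) = n) ?_ ?_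
  · intro x hx
    rw [mem_filter, mem_paletteFinset] at hx
    obtain ⟨hxX, y, hxy, hn⟩ := hx
    refine ⟨y, mem_filter.2 ⟨hXY.mem_of_mem_adj hxX hxy, mem_paletteFinset.2 ⟨x, hxy.symm, ?_⟩⟩,
      hxy, hn⟩
    rwa [Sym2.eq_swap]
  · rintro y - a ⟨-, ha, han⟩ b ⟨-, hb, hbn⟩
    exact isProperEdgeColoring_iff.1 hc y a b ha.symm hb.symm
      (by rw [Sym2.eq_swap, han, Sym2.eq_swap, hbn])

theorem IsProperEdgeColoring.isColorBalanced [Finite V] (hc : IsProperEdgeColoring G c)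
    (hXY : G.IsBipartiteWith X Y) : IsColorBalanced X Y (paletteFinset G c) := fun n ↦
  (hc.card_filter_mem_paletteFinset_le hXY n).antisymm
    (hc.card_filter_mem_paletteFinset_le hXY.symm n)

theorem IsProperEdgeColoring.five_le_card_image_paletteFinset [Fintype V] [DecidableRel G.Adj]
    (hc : IsProperEdgeColoring G c) (hG : IsBiregular G 3 5) :
    5 ≤ #(univ.image (paletteFinset G c)) := by
  obtain ⟨X, Y, hYne, hXY, -, hX, hY⟩ := hG.exists_isBipartiteWith
  have hcard : #X * 3 = #Y * 5 := by
    have := isBipartiteWith_sum_degrees_eq hXY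
    rwa [sum_const_nat hX, sum_const_nat hY] at this
  have hYpos := hYne.card_pos
  have hpalX (x : V) (hx : x ∈ X) : #(paletteFinset G c x) = 3 := by
    rw [hc.card_paletteFinset, hX x hx]
  have hpalY (y : V) (hy : y ∈ Y) : #(paletteFinset G c y) = 5 := by
    rw [hc.card_paletteFinset, hY y hy]
  have hdisj : Disjoint (X.image (paletteFinset G c)) (Y.image (paletteFinset G c)) := by
    simp only [Finset.disjoint_left, mem_image, not_exists, not_and, forall_exists_index, and_imp]
    rintro _ x hx rfl y hy hxy
    have := congrArg card hxy
    rw [hpalX x hx, hpalY y hy] at this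
    omega
  calc 5 ≤ #(X.image (paletteFinset G c)) + #(Y.image (paletteFinset G c)) :=
        (hc.isColorBalanced hXY).five_le_card_image_add_card_image (by omega) (by omega) hpalX hpalY
    _ = #(X.image (paletteFinset G c) ∪ Y.image (paletteFinset G c)) :=
        (card_union_of_disjoint hdisj).symm
    _ ≤ #(univ.image (paletteFinset G c)) := card_le_card <|
        union_subset (image_subset_image (subset_univ X)) (image_subset_image (subset_univ Y))

end LowerBound

section MatchingExtension

variable {V : Type*} {G : SimpleGraph V} {X Y : Set V}

theorem exists_isMatching_of_degree_le [Finite V] [G.LocallyFinite] {k : ℕ} (hk : 0 < k)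
    (hXY : G.IsBipartiteWith X Y) (hX : ∀ x ∈ X, k ≤ G.degree x) (hY : ∀ y ∈ Y, G.degree y ≤ k) :
    ∃ M : G.Subgraph, X ⊆ M.verts ∧ M.IsMatching := by
  classical
  refine exists_isMatching_of_forall_ncard_le hXY fun S hSX ↦ ?_
  lift S to Finset V using S.toFinite
  have hunion : ⋃ x ∈ (S : Set V), G.neighborSet x = S.biUnion (G.neighborFinset ·) := by
    simp
  rw [hunion, Set.ncard_coe_finset, Set.ncard_coe_finset]
  refine Nat.le_of_mul_le_mul_right (card_mul_le_card_mul G.Adj (fun x hx ↦ ?_) fun y hy ↦ ?_) hk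
  · refine (hX x (hSX hx)).trans (card_le_card fun y hy ↦ ?_)
    rw [mem_bipartiteAbove]
    exact ⟨mem_biUnion.2 ⟨x, hx, hy⟩, (G.mem_neighborFinset x y).1 hy⟩
  · obtain ⟨x, hx, hxy⟩ := mem_biUnion.1 hy
    refine (card_le_card fun z hz ↦ ?_).trans
      (hY y (hXY.mem_of_mem_adj (hSX hx) ((G.mem_neighborFinset x y).1 hxy)))
    rw [mem_bipartiteBelow] at hz
    exact (G.mem_neighborFinset y z).2 hz.2.symm

variable {M : G.Subgraph} {v : V}

theorem degree_deleteEdges_edgeSet_add_one (hM : M.IsMatching) (hv : v ∈ M.verts)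
    [Fintype (G.neighborSet v)] [Fintype ((G.deleteEdges M.edgeSet).neighborSet v)] :
    (G.deleteEdges M.edgeSet).degree v + 1 = G.degree v := by
  classical
  obtain ⟨w, hw, hunique⟩ := hM hv
  have herase : (G.deleteEdges M.edgeSet).neighborFinset v = (G.neighborFinset v).erase w := by
    ext u
    simp only [mem_neighborFinset, deleteEdges_adj, Subgraph.mem_edgeSet, mem_erase]
    exact ⟨fun h ↦ ⟨fun huw ↦ h.2 (huw ▸ hw), h.1⟩, fun h ↦ ⟨h.2, fun hu ↦ h.1 (hunique u hu)⟩⟩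
  rw [← card_neighborFinset_eq_degree, herase, card_erase_add_one (by simpa using hw.adj_sub),
    card_neighborFinset_eq_degree]

variable {c : Sym2 V → ℕ} {k : ℕ}

open scoped Classical in
theorem IsProperEdgeColoring.piecewise_edgeSet
    (hc : IsProperEdgeColoring (G.deleteEdges M.edgeSet) c) (hM : M.IsMatching)
    (hk : ∀ e ∈ (G.deleteEdges M.edgeSet).edgeSet, c e ≠ k) :
    IsProperEdgeColoring G (M.edgeSet.piecewise (fun _ ↦ k) c) := by
  rw [isProperEdgeColoring_iff] at hc ⊢
  intro v a b ha hb hab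
  have hdel {u : V} (hu : G.Adj v u) (huM : ¬M.Adj v u) : (G.deleteEdges M.edgeSet).Adj v u :=
    deleteEdges_adj.2 ⟨hu, huM⟩
  by_cases haM : M.Adj v a <;> by_cases hbM : M.Adj v b <;>
    simp only [Set.piecewise, Subgraph.mem_edgeSet, haM, hbM, if_true, if_false] at hab
  · exact hM.eq_of_adj_left haM hbM
  · exact absurd hab.symm (hk _ (hdel hb hbM))
  · exact absurd hab (hk _ (hdel ha haM))
  · exact hc v a b (hdel ha haM) (hdel hb hbM) hab

open scoped Classical in
theorem paletteFinset_piecewise_edgeSet_of_mem [Finite V] (hM : M.IsMatching) (hv : v ∈ M.verts) :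
    paletteFinset G (M.edgeSet.piecewise (fun _ ↦ k) c) v =
      insert k (paletteFinset (G.deleteEdges M.edgeSet) c v) := by
  obtain ⟨w, hw, -⟩ := hM hv
  ext n
  simp only [mem_insert, mem_paletteFinset, deleteEdges_adj]
  constructor
  · rintro ⟨u, hu, rfl⟩
    by_cases huM : s(v, u) ∈ M.edgeSet
    · exact Or.inl (Set.piecewise_eq_of_mem _ _ _ huM)
    · exact Or.inr ⟨u, ⟨hu, huM⟩, (Set.piecewise_eq_of_notMem _ _ _ huM).symm⟩
  · rintro (rfl | ⟨u, ⟨hu, huM⟩, rfl⟩)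
    · exact ⟨w, hw.adj_sub, Set.piecewise_eq_of_mem _ _ _ hw⟩
    · exact ⟨u, hu, Set.piecewise_eq_of_notMem _ _ _ huM⟩

open scoped Classical in
theorem paletteFinset_piecewise_edgeSet_of_notMem [Finite V] (hv : v ∉ M.verts) :
    paletteFinset G (M.edgeSet.piecewise (fun _ ↦ k) c) v =
      paletteFinset (G.deleteEdges M.edgeSet) c v := by
  have hvM (u : V) : s(v, u) ∉ M.edgeSet := fun h ↦ hv (M.edge_vert h)
  ext n
  simp [mem_paletteFinset, deleteEdges_adj, hvM, Set.piecewise_eq_of_notMem]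

end MatchingExtension

section PairedColoring

variable {V : Type*} {H : SimpleGraph V} {X Y : Set V}

theorem exists_endpoint_map (hXY : H.IsBipartiteWith X Y) :
    ∃ p : H.edgeSet → V, ∀ e v, p e = v ↔ v ∈ X ∧ v ∈ e.1 := by
  have hexists (e : H.edgeSet) : ∃ x, ∀ v, x = v ↔ v ∈ X ∧ v ∈ e.1 := by
    obtain ⟨⟨a, b⟩, hab⟩ := e
    wlog ha : a ∈ X generalizing a b
    · have hb : b ∈ X := (hXY.mem_of_adj hab).elim (fun h ↦ absurd h.1 ha) And.right
      obtain ⟨x, hx⟩ := this b a hab.symm hb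
      exact ⟨x, fun v ↦ (hx v).trans (by rw [Sym2.mem_iff, Sym2.mem_iff, or_comm])⟩
    have hb : b ∉ X := fun hb ↦ Set.disjoint_left.1 hXY.disjoint hb (hXY.mem_of_mem_adj ha hab)
    exact ⟨a, fun v ↦ by grind⟩
  choose p hp using hexists
  exact ⟨p, hp⟩

theorem ncard_fiber_le_degree {p : H.edgeSet → V} (hp : ∀ e v, p e = v → v ∈ e.1) (v : V)
    [Fintype (H.neighborSet v)] : (p ⁻¹' {v}).ncard ≤ H.degree v := by
  classical
  rw [← card_incidenceSet_eq_degree, ← Nat.card_coe_set_eq, ← Nat.card_eq_fintype_card]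
  refine Nat.card_le_card_of_injective
    (fun e : p ⁻¹' {v} ↦ (⟨e.1.1, e.1.2, hp _ _ e.2⟩ : H.incidenceSet v)) fun e e' h ↦ ?_
  simpa [Subtype.ext_iff] using h

theorem isProperEdgeColoring_of_endpoint_maps (hXY : H.IsBipartiteWith X Y) {p q : H.edgeSet → V}
    (hp : ∀ e v, p e = v ↔ v ∈ X ∧ v ∈ e.1) (hq : ∀ e v, q e = v ↔ v ∈ Y ∧ v ∈ e.1)
    {c : Sym2 V → ℕ} (hpinj : ∀ e e' : H.edgeSet, p e = p e' → c e = c e' → e = e')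
    (hqinj : ∀ e e' : H.edgeSet, q e = q e' → c e = c e' → e = e') :
    IsProperEdgeColoring H c := by
  rw [isProperEdgeColoring_iff]
  intro v a b ha hb hab
  suffices h : (⟨s(v, a), ha⟩ : H.edgeSet) = ⟨s(v, b), hb⟩ from
    Sym2.congr_right.1 (congrArg Subtype.val h)
  rcases hXY.mem_of_adj ha with ⟨hv, -⟩ | ⟨hv, -⟩
  · exact hpinj _ _ (((hp _ v).2 ⟨hv, by simp⟩).trans ((hp _ v).2 ⟨hv, by simp⟩).symm) hab
  · exact hqinj _ _ (((hq _ v).2 ⟨hv, by simp⟩).trans ((hq _ v).2 ⟨hv, by simp⟩).symm) hab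

theorem two_mul_toNat_add_toNat_inj {s r s' r' : Bool} :
    2 * s.toNat + r.toNat = 2 * s'.toNat + r'.toNat ↔ s = s' ∧ r = r' := by
  decide +revert

theorem exists_isProperEdgeColoring_paired [Finite V] [H.LocallyFinite]
    (hXY : H.IsBipartiteWith X Y) (hdeg : ∀ v, H.degree v ≤ 4) :
    ∃ c, IsProperEdgeColoring H c ∧ (∀ e, c e < 4) ∧ ∀ x ∈ X, H.degree x ≤ 2 →
      ∀ i ∈ paletteFinset H c x, ∀ j ∈ paletteFinset H c x, i / 2 = j / 2 := by
  classical
  obtain ⟨p, hp⟩ := exists_endpoint_map hXY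
  obtain ⟨q, hq⟩ := exists_endpoint_map hXY.symm
  have hpfiber (v : V) := ncard_fiber_le_degree (fun e v h ↦ ((hp e v).1 h).2) v
  have hqfiber (v : V) := ncard_fiber_le_degree (fun e v h ↦ ((hq e v).1 h).2) v
  obtain ⟨s, r, hqinj, hpinj, hs⟩ := exists_paired_coloring
    (fun v ↦ (hqfiber v).trans (hdeg v)) (fun v ↦ (hpfiber v).trans (hdeg v))
  let c (e : Sym2 V) : ℕ :=
    if h : e ∈ H.edgeSet then 2 * (s ⟨e, h⟩).toNat + (r ⟨e, h⟩).toNat else 0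
  have hc (e : H.edgeSet) : c e = 2 * (s e).toNat + (r e).toNat := dif_pos e.2
  have hc_inj {e e' : H.edgeSet} (h : c e = c e') : s e = s e' ∧ r e = r e' := by
    rwa [hc, hc, two_mul_toNat_add_toNat_inj] at h
  have hc_half (e : H.edgeSet) : c e / 2 = (s e).toNat := by
    have := (r e).toNat_lt
    rw [hc]
    omega
  refine ⟨c, ?_, fun e ↦ ?_, fun x hx hdegx i hi j hj ↦ ?_⟩
  · exact isProperEdgeColoring_of_endpoint_maps hXY hp hq
      (fun e e' h hcc ↦ hpinj e e' h (hc_inj hcc).1 (hc_inj hcc).2)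
      (fun e e' h hcc ↦ hqinj e e' h (hc_inj hcc).1 (hc_inj hcc).2)
  · by_cases h : e ∈ H.edgeSet
    · have := (s ⟨e, h⟩).toNat_lt
      have : c e / 2 = (s ⟨e, h⟩).toNat := hc_half ⟨e, h⟩
      omega
    · simp [c, h]
  · obtain ⟨u, hu, rfl⟩ := mem_paletteFinset.1 hi
    obtain ⟨w, hw, rfl⟩ := mem_paletteFinset.1 hj
    have hpu : p ⟨s(x, u), hu⟩ = x := (hp _ x).2 ⟨hx, by simp⟩
    have hpw : p ⟨s(x, w), hw⟩ = x := (hp _ x).2 ⟨hx, by simp⟩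
    rw [hc_half ⟨s(x, u), hu⟩, hc_half ⟨s(x, w), hw⟩,
      hs _ _ (by rw [hpu]; exact (hpfiber x).trans hdegx) (hpu.trans hpw.symm)]

end PairedColoring

section UpperBound

/-- The palettes of the coloring that attains the upper bound: color `4` is given to a matching
saturating the vertices of degree `5`, the other edges receive the paired colors `0, 1` and
`2, 3`. -/
def matchedPairedPalettes : Finset (Finset ℕ) :=
  insert (range 5) ({{0, 1, 4}, {2, 3, 4}} ∪ powersetCard 3 (range 4))

theorem card_matchedPairedPalettes : #matchedPairedPalettes = 7 := by
  decide

theorem insert_four_mem_matchedPairedPalettes_of_card_four {P : Finset ℕ} (hP : P ⊆ range 4)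
    (hcard : #P = 4) : insert 4 P ∈ matchedPairedPalettes := by
  rw [eq_of_subset_of_card_le hP (by simp [hcard])]
  decide

theorem insert_four_mem_matchedPairedPalettes_of_card_two {P : Finset ℕ} (hP : P ⊆ range 4)
    (hcard : #P = 2) (hhalf : ∀ i ∈ P, ∀ j ∈ P, i / 2 = j / 2) :
    insert 4 P ∈ matchedPairedPalettes := by
  have hall : ∀ P ∈ powersetCard 2 (range 4), (∀ i ∈ P, ∀ j ∈ P, i / 2 = j / 2) →
      insert 4 P ∈ matchedPairedPalettes := by decide
  exact hall P (mem_powersetCard.2 ⟨hP, hcard⟩) hhalf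

theorem mem_matchedPairedPalettes_of_card_three {P : Finset ℕ} (hP : P ⊆ range 4)
    (hcard : #P = 3) : P ∈ matchedPairedPalettes :=
  mem_insert_of_mem (mem_union_right _ (mem_powersetCard.2 ⟨hP, hcard⟩))

variable {V : Type*} [Fintype V] {G : SimpleGraph V} [DecidableRel G.Adj]

theorem IsBiregular.exists_isProperEdgeColoring_paletteFinset_mem (hG : IsBiregular G 3 5) :
    ∃ c, IsProperEdgeColoring G c ∧ ∀ v, paletteFinset G c v ∈ matchedPairedPalettes := by
  classical
  obtain ⟨X, Y, -, hXY, hcover, hX, hY⟩ := hG.exists_isBipartiteWith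
  obtain ⟨M, hYM, hM⟩ := exists_isMatching_of_degree_le (k := 3) (by norm_num) hXY.symm
    (fun y hy ↦ by rw [hY y hy]; norm_num) fun x hx ↦ (hX x hx).le
  let H := G.deleteEdges M.edgeSet
  have hHG : H ≤ G := deleteEdges_le _
  have hHXY : H.IsBipartiteWith X Y := ⟨hXY.disjoint, fun _ _ h ↦ hXY.mem_of_adj (hHG h)⟩
  have hdegM {v : V} (hv : v ∈ M.verts) : H.degree v + 1 = G.degree v :=
    degree_deleteEdges_edgeSet_add_one hM hv
  have hdegY {y : V} (hy : y ∈ Y) : H.degree y = 4 :=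
    Nat.succ_injective ((hdegM (hYM hy)).trans (hY y hy))
  have hdegX {x : V} (hx : x ∈ X) : H.degree x ≤ 3 := (degree_le_of_le hHG).trans_eq (hX x hx)
  obtain ⟨c, hc, hc4, hpaired⟩ := exists_isProperEdgeColoring_paired hHXY fun v ↦
    (hcover v).elim (fun hx ↦ (hdegX hx).trans (by norm_num)) fun hy ↦ (hdegY hy).le
  have hproper := hc.piecewise_edgeSet hM fun e _ ↦ (hc4 e).ne
  have hsub := paletteFinset_subset_range (G := H) hc4
  refine ⟨M.edgeSet.piecewise (fun _ ↦ 4) c, hproper, fun v ↦ ?_⟩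
  by_cases hv : v ∈ M.verts
  · rw [paletteFinset_piecewise_edgeSet_of_mem hM hv]
    rcases hcover v with hvX | hvY
    · have hdeg : H.degree v = 2 := Nat.succ_injective ((hdegM hv).trans (hX v hvX))
      exact insert_four_mem_matchedPairedPalettes_of_card_two (hsub v)
        ((hc.card_paletteFinset v).trans hdeg) (hpaired v hvX hdeg.le)
    · exact insert_four_mem_matchedPairedPalettes_of_card_four (hsub v)
        ((hc.card_paletteFinset v).trans (hdegY hvY))
  · have hvX : v ∈ X := (hcover v).resolve_right fun hvY ↦ hv (hYM hvY)
    have hpal := paletteFinset_piecewise_edgeSet_of_notMem (c := c) (k := 4) hv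
    have hcard := (hproper.card_paletteFinset v).trans (hX v hvX)
    rw [hpal] at hcard ⊢
    exact mem_matchedPairedPalettes_of_card_three (hsub v) hcard

end UpperBound

/-- If `G` is `(3,5)`-biregular, then `5 ≤ š(G) ≤ 7`. -/
theorem palette_index_three_five_biregular {V : Type*} [Fintype V]
    (G : SimpleGraph V) [DecidableRel G.Adj]
    (hG : IsBiregular G 3 5) :
    5 ≤ paletteIndex G ∧ paletteIndex G ≤ 7 := by
  obtain ⟨c, hc, hpal⟩ := hG.exists_isProperEdgeColoring_paletteFinset_mem
  constructor
  · obtain ⟨c', hc', hcard⟩ := exists_paletteIndex_eq ⟨c, hc⟩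
    exact hcard ▸ hc'.five_le_card_image_paletteFinset hG
  · calc paletteIndex G ≤ #(univ.image (paletteFinset G c)) := paletteIndex_le hc
      _ ≤ #matchedPairedPalettes := card_le_card (image_subset_iff.2 fun v _ ↦ hpal v)
      _ = 7 := card_matchedPairedPalettes
end
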